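/- Let G be the symmetric group on three letters and let s : G → ℤ/2 be the sign homomorphism. Define ψ₀ : G × G → ℂˣ by ψ₀(g, h) = -1 if g and h are both odd permutations, and ψ₀(g, h) = 1 otherwise. Then: ψ₀ is a twisted 2-cocycle with respect to s; ψ₀ is not a twisted 2-coboundary; and every twisted 2-cocycle on G with respect to s is cohomologous to the constant function 1 or to ψ₀. (Equivalently, H²(S₃ᵀ, ℂˣ_T) ≅ ℤ/2 for the anti-linear group S₃ᵀ = ℤ₃ ⋊ ℤ₂ᵀ: there are exactly two S₃ᵀ-SPT phases, the trivial one and the Haldane chain protected by the ℤ₂ᵀ subgroup.) -/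

import Mathlib

noncomputable section

/-- Complex conjugation on the group of units `ℂˣ`. -/
def conjUnits : ℂˣ →* ℂˣ := Units.map (starRingEnd ℂ).toMonoidHom

/-- The symmetric group on three letters. -/
abbrev S3 := Equiv.Perm (Fin 3)

/-- The sign homomorphism `S₃ → ℤ/2` (odd permutations map to `1`). -/
def s : S3 → ZMod 2 := fun g => if Equiv.Perm.sign g = 1 then 0 else 1

/-- The twisted action of `g ∈ S₃` on `ℂˣ`: trivial if `s g = 0` (even permutations),
complex conjugation otherwise. -/
def tAct (g : S3) (z : ℂˣ) : ℂˣ := if s g = 0 then z else conjUnits z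

/-- Twisted 2-cocycle condition on `S₃` with respect to the sign grading `s`. -/
def IsTwisted2Cocycle (ψ : S3 → S3 → ℂˣ) : Prop :=
  ∀ g₁ g₂ g₃,
    tAct g₁ (ψ g₂ g₃) * ψ g₁ (g₂ * g₃) = ψ (g₁ * g₂) g₃ * ψ g₁ g₂

/-- Twisted 2-coboundary condition on `S₃` with respect to the sign grading `s`. -/
def IsTwisted2Coboundary (ψ : S3 → S3 → ℂˣ) : Prop :=
  ∃ β : S3 → ℂˣ, ∀ g₁ g₂,
    ψ g₁ g₂ = tAct g₁ (β g₂) * (β (g₁ * g₂))⁻¹ * β g₁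

/-- Two twisted 2-cochains are cohomologous if their pointwise quotient is a twisted
2-coboundary. -/
def Cohomologous (ψ ψ' : S3 → S3 → ℂˣ) : Prop :=
  IsTwisted2Coboundary fun g₁ g₂ => ψ g₁ g₂ * (ψ' g₁ g₂)⁻¹

/-- The nontrivial `S₃ᵀ`-SPT cocycle: `ψ₀(g, h) = -1` if `g` and `h` are both odd
permutations, and `1` otherwise. -/
def ψ₀ : S3 → S3 → ℂˣ := fun g h =>
  if Equiv.Perm.sign g = -1 ∧ Equiv.Perm.sign h = -1 then -1 else 1

theorem s3t_act_mul (g h : S3) (z : ℂˣ) : tAct g (tAct h z) = tAct (g * h) z := by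
  have hc : conjUnits (conjUnits z) = z := by ext; simp [conjUnits]
  rcases Int.units_eq_one_or (Equiv.Perm.sign g) with hg | hg <;>
  rcases Int.units_eq_one_or (Equiv.Perm.sign h) with hh | hh <;>
  simp [tAct, s, hg, hh, hc]

theorem s3t_act_map (g : S3) (z w : ℂˣ) : tAct g (z * w) = tAct g z * tAct g w := by
  unfold tAct; split_ifs <;> simp

/-- Left multiplication by the lift of `g` in the extension. -/
def LL (ψ : S3 → S3 → ℂˣ) (g : S3) : Function.End (ℂˣ × S3) :=
  fun p => (tAct g p.1 * ψ g p.2, g * p.2)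

/-- Scalars. -/
def cc (z : ℂˣ) : Function.End (ℂˣ × S3) := fun p => (z * p.1, p.2)

theorem cc_mul (z w : ℂˣ) : cc (z * w) = cc z * cc w := by
  funext p; simp [cc, Function.End.mul_def, Function.comp, mul_assoc]

theorem cc_one : cc 1 = 1 := by
  funext p; simp [cc, Function.End.one_def]

theorem cc_cancel {z w : ℂˣ} {A : Function.End (ℂˣ × S3)} (h : cc z * A = cc w * A) : z = w := by
  have := congrArg Prod.fst (congrFun h (1, 1))
  simpa [cc, Function.End.mul_def, Function.comp] using this

theorem cc_inj {z w : ℂˣ} (h : cc z = cc w) : z = w :=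
  cc_cancel (A := 1) (by simpa using h)

theorem LL_cc (ψ : S3 → S3 → ℂˣ) (g : S3) (z : ℂˣ) : LL ψ g * cc z = cc (tAct g z) * LL ψ g := by
  funext p; simp [cc, LL, Function.End.mul_def, Function.comp, s3t_act_map, mul_assoc]

theorem LL_mul {ψ : S3 → S3 → ℂˣ} (hψ : IsTwisted2Cocycle ψ) (g h : S3) :
    LL ψ g * LL ψ h = cc (ψ g h) * LL ψ (g * h) := by
  funext p
  have := hψ g h p.2
  simp only [cc, LL, Function.End.mul_def, Function.comp, s3t_act_map, s3t_act_mul, mul_assoc, this]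
  rw [Prod.mk.injEq]
  refine ⟨?_, rfl⟩
  rw [mul_comm (ψ (g * h) p.2), mul_left_comm]

theorem LL_one {ψ : S3 → S3 → ℂˣ} (hψ : IsTwisted2Cocycle ψ) : LL ψ 1 = cc (ψ 1 1) := by
  funext p
  have := hψ 1 1 p.2
  have h1 : ∀ z, tAct 1 z = z := by intro z; simp [tAct, s]
  simp only [h1, one_mul] at this
  have := mul_left_cancel this
  simp [cc, LL, h1, this, mul_comm]

/-- The rotation. -/
def rr : S3 := finRotate 3
/-- The reflection. -/
def tt : S3 := Equiv.swap 1 2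
/-- Sign index. -/
def jj (g : S3) : ℕ := if Equiv.Perm.sign g = 1 then 0 else 1

theorem idx_j : ∀ g h : S3, jj (g * h) = (jj g + jj h) % 2 := by decide
theorem idx_i : ∀ g h : S3, ((g * h) 0).val =
    ((g 0).val + (if jj g = 0 then (h 0).val else 2 * (h 0).val)) % 3 := by decide
theorem idx_g : ∀ g : S3, rr ^ (g 0).val * tt ^ (jj g) = g := by decide

theorem s3t_act_r (z : ℂˣ) : tAct rr z = z := by
  have : Equiv.Perm.sign rr = 1 := by decide
  simp [tAct, s, this]

theorem s3t_act_t (z : ℂˣ) : tAct tt z = conjUnits z := by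
  have : Equiv.Perm.sign tt = -1 := by decide
  simp [tAct, s, this]

theorem words {M : Type*} [Monoid M] (R T E : M) (hR : R * (R * R) = 1) (hT : T * T = E)
    (hER : R * E = E * R) (hTR : T * R = R * (R * T)) (i j k l : ℕ)
    (hi : i < 3) (hj : j < 2) (hk : k < 3) (hl : l < 2) :
    (R ^ i * T ^ j) * (R ^ k * T ^ l) = (if j = 1 ∧ l = 1 then E else 1) *
      (R ^ ((i + (if j = 0 then k else 2 * k)) % 3) * T ^ ((j + l) % 2)) := by
  have hR' : ∀ x, R * (R * (R * x)) = x := fun x => by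
    rw [← mul_assoc R R x, ← mul_assoc R, hR, one_mul]
  have hTR' : ∀ x, T * (R * x) = R * (R * (T * x)) := fun x => by
    rw [← mul_assoc T R x, hTR, mul_assoc, mul_assoc]
  have hER' : ∀ x, R * (E * x) = E * (R * x) := fun x => by
    rw [← mul_assoc R E x, hER, mul_assoc]
  interval_cases i <;> interval_cases j <;> interval_cases k <;> interval_cases l <;>
    simp [pow_succ, mul_assoc, hR, hT, hER, hTR, hR', hTR', hER']

/-- Being a lift of `g`. -/
def Over (ψ : S3 → S3 → ℂˣ) (g : S3) (A : Function.End (ℂˣ × S3)) : Prop :=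
  ∃ z, A = cc z * LL ψ g

theorem Over.mul {ψ : S3 → S3 → ℂˣ} (hψ : IsTwisted2Cocycle ψ) {g h : S3}
    {A B : Function.End (ℂˣ × S3)} (hA : Over ψ g A) (hB : Over ψ h B) :
    Over ψ (g * h) (A * B) := by
  obtain ⟨z, rfl⟩ := hA
  obtain ⟨w, rfl⟩ := hB
  refine ⟨z * tAct g w * ψ g h, ?_⟩
  rw [cc_mul, cc_mul, mul_assoc (cc z), ← mul_assoc (LL ψ g), LL_cc]
  simp only [mul_assoc]
  rw [LL_mul hψ]

theorem Over.one {ψ : S3 → S3 → ℂˣ} (hψ : IsTwisted2Cocycle ψ) : Over ψ 1 1 :=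
  ⟨(ψ 1 1)⁻¹, by rw [LL_one hψ, ← cc_mul, inv_mul_cancel, cc_one]⟩

theorem Over.pow {ψ : S3 → S3 → ℂˣ} (hψ : IsTwisted2Cocycle ψ) {g : S3}
    {A : Function.End (ℂˣ × S3)} (hA : Over ψ g A) (n : ℕ) : Over ψ (g ^ n) (A ^ n) := by
  induction n with
  | zero => simpa using Over.one hψ
  | succ n ih => rw [pow_succ, pow_succ]; exact ih.mul hψ hA

theorem Over.scalar {ψ : S3 → S3 → ℂˣ} (hψ : IsTwisted2Cocycle ψ)
    {A : Function.End (ℂˣ × S3)} (hA : Over ψ 1 A) : ∃ z, A = cc z := by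
  obtain ⟨z, rfl⟩ := hA
  exact ⟨z * ψ 1 1, by rw [LL_one hψ, cc_mul]⟩

theorem Over.ratio {ψ : S3 → S3 → ℂˣ} {g : S3}
    {A B : Function.End (ℂˣ × S3)} (hA : Over ψ g A) (hB : Over ψ g B) : ∃ z, A = cc z * B := by
  obtain ⟨z, rfl⟩ := hA
  obtain ⟨w, rfl⟩ := hB
  exact ⟨z * w⁻¹, by rw [← mul_assoc, ← cc_mul, inv_mul_cancel_right]⟩

theorem exists_R {ψ : S3 → S3 → ℂˣ} (hψ : IsTwisted2Cocycle ψ) :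
    ∃ R, Over ψ rr R ∧ R * (R * R) = 1 ∧ ∀ z, R * cc z = cc z * R := by
  have h0 : Over ψ rr (LL ψ rr) := ⟨1, by rw [cc_one, one_mul]⟩
  have h3 : Over ψ 1 (LL ψ rr * (LL ψ rr * LL ψ rr)) := by
    have := h0.mul hψ (h0.mul hψ h0)
    rwa [show rr * (rr * rr) = 1 by decide] at this
  obtain ⟨a, ha⟩ := h3.scalar hψ
  obtain ⟨m, hm⟩ := IsAlgClosed.exists_pow_nat_eq ((a⁻¹ : ℂˣ) : ℂ) (n := 3) (by norm_num)
  have hm0 : m ≠ 0 := by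
    rintro rfl
    exact (a⁻¹ : ℂˣ).ne_zero (by rw [← hm]; norm_num)
  have hu : (Units.mk0 m hm0) ^ 3 = a⁻¹ := by ext; simpa using hm
  generalize Units.mk0 m hm0 = u at hu
  have hc : ∀ z, LL ψ rr * cc z = cc z * LL ψ rr := fun z => by rw [LL_cc, s3t_act_r]
  refine ⟨cc u * LL ψ rr, ⟨u, rfl⟩, ?_, ?_⟩
  · have e : cc u * LL ψ rr * (cc u * LL ψ rr * (cc u * LL ψ rr))
        = cc (u ^ 3) * (LL ψ rr * (LL ψ rr * LL ψ rr)) := by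
      have hc' : ∀ z x, LL ψ rr * (cc z * x) = cc z * (LL ψ rr * x) := fun z x => by
        rw [← mul_assoc, hc, mul_assoc]
      simp only [pow_succ, pow_zero, one_mul, cc_mul, mul_assoc, hc']
    rw [e, ha, ← cc_mul, hu, inv_mul_cancel, cc_one]
  · intro z
    rw [mul_assoc, hc, ← mul_assoc, ← mul_assoc, ← cc_mul, ← cc_mul, mul_comm]

theorem exists_T {ψ : S3 → S3 → ℂˣ} (hψ : IsTwisted2Cocycle ψ) :
    ∃ T, Over ψ tt T ∧ (T * T = cc 1 ∨ T * T = cc (-1)) ∧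
      ∀ z, T * cc z = cc (conjUnits z) * T := by
  have h0 : Over ψ tt (LL ψ tt) := ⟨1, by rw [cc_one, one_mul]⟩
  have h3 : Over ψ 1 (LL ψ tt * LL ψ tt) := by
    have := h0.mul hψ h0
    rwa [show tt * tt = 1 by decide] at this
  obtain ⟨a, ha⟩ := h3.scalar hψ
  have hc : ∀ z, LL ψ tt * cc z = cc (conjUnits z) * LL ψ tt := fun z => by
    rw [LL_cc, s3t_act_t]
  have hreal : conjUnits a = a := by
    apply cc_cancel (A := LL ψ tt)
    rw [← hc, ← ha, mul_assoc]
  obtain ⟨x, hx⟩ : ∃ x : ℝ, (x : ℂ) = a := by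
    have : (starRingEnd ℂ) (a : ℂ) = a := congrArg Units.val hreal
    obtain ⟨x, hx⟩ := Complex.conj_eq_iff_real.1 this
    exact ⟨x, hx.symm⟩
  have hx0 : x ≠ 0 := by rintro rfl; exact a.ne_zero (by rw [← hx]; simp)
  have hpos : 0 < |x| := abs_pos.2 hx0
  have hl : (((Real.sqrt |x|)⁻¹ : ℝ) : ℂ) ≠ 0 := by
    exact_mod_cast (inv_pos.2 (Real.sqrt_pos.2 hpos)).ne'
  obtain ⟨u, hu⟩ : ∃ u : ℂˣ, (u : ℂ) = (((Real.sqrt |x|)⁻¹ : ℝ) : ℂ) := ⟨Units.mk0 _ hl, rfl⟩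
  have huc : conjUnits u = u := by
    ext
    change (starRingEnd ℂ) (u : ℂ) = u
    rw [hu, Complex.conj_ofReal]
  have huu : (u * u * a : ℂ) = ((|x|⁻¹ * x : ℝ) : ℂ) := by
    rw [hu, ← hx, ← Complex.ofReal_mul, ← Complex.ofReal_mul, ← mul_inv,
      Real.mul_self_sqrt hpos.le]
  have hTT : cc u * LL ψ tt * (cc u * LL ψ tt) = cc (u * u * a) := by
    rw [mul_assoc, ← mul_assoc (LL ψ tt), hc, huc, mul_assoc, ha, cc_mul, cc_mul, mul_assoc]
  refine ⟨cc u * LL ψ tt, ⟨u, rfl⟩, ?_, ?_⟩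
  · rw [hTT]
    rcases lt_or_gt_of_ne hx0 with h | h
    · right
      congr 1
      ext
      push_cast
      rw [huu, abs_of_neg h, inv_neg, neg_mul, inv_mul_cancel₀ hx0]; simp
    · left
      congr 1
      ext
      push_cast
      rw [huu, abs_of_pos h, inv_mul_cancel₀ hx0]; simp
  · intro z
    rw [mul_assoc, hc, ← mul_assoc, ← mul_assoc, ← cc_mul, ← cc_mul, mul_comm]

theorem rel_TR {ψ : S3 → S3 → ℂˣ} (hψ : IsTwisted2Cocycle ψ) {R T : Function.End (ℂˣ × S3)}
    (oR : Over ψ rr R) (oT : Over ψ tt T) (hR : R * (R * R) = 1)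
    (cR : ∀ z, R * cc z = cc z * R) (cT : ∀ z, T * cc z = cc (conjUnits z) * T)
    (e : ℂˣ) (hT : T * T = cc e) : T * R = R * (R * T) := by
  have o1 := oT.mul hψ oR
  have o2 := oR.mul hψ (oR.mul hψ oT)
  rw [show rr * (rr * tt) = tt * rr by decide] at o2
  obtain ⟨w, hw⟩ := o1.ratio o2
  have hR' : ∀ x, R * (R * (R * x)) = x := fun x => by
    rw [← mul_assoc R R x, ← mul_assoc R, hR, one_mul]
  have hw' : ∀ x, T * (R * x) = cc w * (R * (R * (T * x))) := fun x => by
    rw [← mul_assoc T R x, hw]; simp only [mul_assoc]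
  have cR' : ∀ z x, R * (cc z * x) = cc z * (R * x) := fun z x => by
    rw [← mul_assoc, cR, mul_assoc]
  have cT' : ∀ z x, T * (cc z * x) = cc (conjUnits z) * (T * x) := fun z x => by
    rw [← mul_assoc, cT, mul_assoc]
  have h3 : w * (w * w) = 1 := by
    apply cc_cancel (A := T)
    have : T * (R * (R * R)) = T := by rw [hR, mul_one]
    simp only [hw', hw, cR', hR'] at this
    rw [cc_mul, cc_mul, cc_one, one_mul]
    simpa only [mul_assoc] using this
  have h2 : conjUnits w * (w * w) = 1 := by
    apply cc_cancel (A := R * (T * T))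
    have : T * (T * R) = R * (T * T) := by
      rw [← mul_assoc, hT, cR]
    simp only [hw', hw, cR', hR', cT'] at this
    rw [cc_mul, cc_mul, cc_one, one_mul]
    simpa only [mul_assoc] using this
  have hcw : conjUnits w = w := mul_right_cancel (h2.trans h3.symm)
  obtain ⟨x, hx⟩ : ∃ x : ℝ, (w : ℂ) = x :=
    Complex.conj_eq_iff_real.1 (congrArg Units.val hcw)
  have hx3 : x * (x * x) = 1 := by
    have := congrArg Units.val h3
    push_cast at this
    rw [hx] at this
    exact_mod_cast this
  have hx1 : x = 1 := by
    have : (x - 1) * ((x + 1 / 2) ^ 2 + 3 / 4) = 0 := by linarith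
    rcases mul_eq_zero.1 this with h | h
    · linarith
    · nlinarith [sq_nonneg (x + 1 / 2)]
  have hw1 : w = 1 := by ext; rw [hx, hx1]; simp
  rw [hw, hw1, cc_one, one_mul]

theorem jj_eq_one (g : S3) : jj g = 1 ↔ Equiv.Perm.sign g = -1 := by
  rcases Int.units_eq_one_or (Equiv.Perm.sign g) with hg | hg <;> simp [jj, hg]

theorem jj_lt (g : S3) : jj g < 2 := by unfold jj; split_ifs <;> norm_num

theorem classify {ψ : S3 → S3 → ℂˣ} (hψ : IsTwisted2Cocycle ψ) :
    ∃ e : ℂˣ, (e = 1 ∨ e = -1) ∧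
      Cohomologous ψ (fun g h => if jj g = 1 ∧ jj h = 1 then e else 1) := by
  obtain ⟨R, oR, hR, cR⟩ := exists_R hψ
  obtain ⟨T, oT, hT, cT⟩ := exists_T hψ
  obtain ⟨e, he, hTe⟩ : ∃ e : ℂˣ, (e = 1 ∨ e = -1) ∧ T * T = cc e := by
    rcases hT with h | h
    · exact ⟨1, Or.inl rfl, h⟩
    · exact ⟨-1, Or.inr rfl, h⟩
  have hTR := rel_TR hψ oR oT hR cR cT e hTe
  refine ⟨e, he, ?_⟩
  have hS : ∀ g : S3, Over ψ g (R ^ (g 0).val * T ^ jj g) := fun g => by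
    have := (oR.pow hψ (g 0).val).mul hψ (oT.pow hψ (jj g))
    rwa [idx_g] at this
  choose b hb using hS
  refine ⟨fun g => (b g)⁻¹, fun g h => ?_⟩
  have key := words R T (cc e) hR hTe (cR e) hTR (g 0).val (jj g) (h 0).val (jj h)
    (g 0).isLt (jj_lt g) (h 0).isLt (jj_lt h)
  rw [← idx_i, ← idx_j, hb, hb, hb] at key
  have hif : (if jj g = 1 ∧ jj h = 1 then cc e else 1) =
      cc (if jj g = 1 ∧ jj h = 1 then e else 1) := by
    split_ifs
    · rfl
    · exact cc_one.symm
  rw [hif] at key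
  have key2 : b g * tAct g (b h) * ψ g h = (if jj g = 1 ∧ jj h = 1 then e else 1) * b (g * h) := by
    apply cc_cancel (A := LL ψ (g * h))
    rw [cc_mul _ (b (g * h)), mul_assoc (cc _) (cc _) (LL _ _), ← key, cc_mul, cc_mul,
      mul_assoc (cc (b g)) (LL ψ g), ← mul_assoc (LL ψ g), LL_cc]
    simp only [mul_assoc]
    rw [LL_mul hψ]
  have hinv : tAct g (b h)⁻¹ = (tAct g (b h))⁻¹ := by
    unfold tAct; split_ifs <;> simp
  have hψe : ψ g h = (b g * tAct g (b h))⁻¹ *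
      ((if jj g = 1 ∧ jj h = 1 then e else 1) * b (g * h)) := by
    rw [← key2, inv_mul_cancel_left]
  have fin : ∀ x y z q : ℂˣ, (x * y)⁻¹ * (q * z) * q⁻¹ = y⁻¹ * z * x⁻¹ := by
    intro x y z q
    ext
    push_cast
    field_simp
  simp only [hinv, inv_inv, hψe]
  exact fin _ _ _ _

/-- `H²(S₃ᵀ, ℂˣ_T) ≅ ℤ/2`: `ψ₀` is a twisted 2-cocycle, it is not a twisted
2-coboundary, and every twisted 2-cocycle on `S₃` is cohomologous to `1` or to `ψ₀`. -/
theorem H2_S3T :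
    IsTwisted2Cocycle ψ₀ ∧ ¬ IsTwisted2Coboundary ψ₀ ∧
      ∀ ψ, IsTwisted2Cocycle ψ →
        Cohomologous ψ (fun _ _ => 1) ∨ Cohomologous ψ ψ₀ := by
  refine ⟨?_, ?_, ?_⟩
  · intro a b c
    have h1 : conjUnits (-1) = -1 := by ext; simp [conjUnits]
    rcases Int.units_eq_one_or (Equiv.Perm.sign a) with ha | ha <;>
    rcases Int.units_eq_one_or (Equiv.Perm.sign b) with hb | hb <;>
    rcases Int.units_eq_one_or (Equiv.Perm.sign c) with hc | hc <;>
    simp [tAct, s, ψ₀, ha, hb, hc, h1]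
  · rintro ⟨β, hβ⟩
    have ht : Equiv.Perm.sign tt = -1 := by decide
    have h1 := hβ 1 1
    have h2 := hβ tt tt
    have hb1 : β 1 = 1 := by simpa [tAct, s, ψ₀] using h1.symm
    rw [s3t_act_t, show tt * tt = 1 by decide, hb1] at h2
    have h3 := congrArg Units.val h2
    have h4 : (-1 : ℂ) = (starRingEnd ℂ) (β tt : ℂ) * (β tt : ℂ) := by
      simpa [ψ₀, ht, conjUnits] using h3
    rw [mul_comm, Complex.mul_conj] at h4
    have h5 : (-1 : ℝ) = Complex.normSq (β tt : ℂ) := by exact_mod_cast h4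
    linarith [Complex.normSq_nonneg (β tt : ℂ)]
  · intro ψ hψ
    obtain ⟨e, rfl | rfl, h⟩ := classify hψ
    · left
      simpa using h
    · right
      have : ψ₀ = fun g h => if jj g = 1 ∧ jj h = 1 then (-1 : ℂˣ) else 1 := by
        funext g h; simp only [ψ₀, jj_eq_one]
      rw [this]
      exact h

end
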